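/- arXiv:1412.7363 — 2 statements merged into one kernel-verified Lean document; each statement's English description precedes it below -/
import Mathlib

section
/- Let b, c be positive integers with q = gcd(b,c), let p > 1 be an integer, and let χ₁, χ₂ be non-principal primitive Dirichlet characters of moduli k₁ and k₂ respectively, satisfying (−1)^{p+1}·χ₁(−1)·χ₂(−1) = 1. Then (p+1)·( b·k₂·(c·k₁)^p·S̃_p(b,c:χ₁,χ₂) + c·k₁·(b·k₂)^p·S̃_p(c,b: χ̄₂, χ̄₁) ) = Σ_{j=0}^{p+1} C(p+1,j)·(b·k₂)^j·(c·k₁)^{p+1−j}·B_{j,χ̄₁}·B_{p+1−j,χ₂} + p·q^{p+1}·(k₁·k₂)^p·Σ_{h=1}^{k₁} Σ_{j=1}^{k₂} χ₁(h)·χ̄₂(j)·B̄_{p+1}( c·j/(q·k₂) + b·h/(q·k₁) ). -/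
open Finset

/-- The `n`-th Bernoulli polynomial evaluated at a real number. -/
noncomputable def BPoly (n : ℕ) (x : ℝ) : ℝ :=
  Polynomial.eval x ((Polynomial.bernoulli n).map (algebraMap ℚ ℝ))

open scoped Classical in
/-- The `n`-th Bernoulli function `B̄ₙ`. -/
noncomputable def BFun (n : ℕ) (x : ℝ) : ℝ :=
  if n = 1 then (if ∃ m : ℤ, x = (m : ℝ) then 0 else x - ⌊x⌋ - 1/2)
  else BPoly n (Int.fract x)

/-- The generalized Bernoulli function `B̄_{m,χ}` attached to a Dirichlet character. -/
noncomputable def BFunChar {k : ℕ} (χ : DirichletCharacter ℂ k) (m : ℕ) (x : ℝ) : ℂ :=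
  (k : ℂ) ^ ((m : ℤ) - 1) *
    ∑ n ∈ Finset.Icc 1 (k - 1), (starRingEnd ℂ) (χ (n : ZMod k)) * ((BFun m (((n : ℝ) + x) / k)) : ℂ)

/-- The generalized Bernoulli number `B_{m,χ} = B̄_{m,χ}(0)`. -/
noncomputable def BNumChar {k : ℕ} (χ : DirichletCharacter ℂ k) (m : ℕ) : ℂ := BFunChar χ m 0

/-- The complex conjugate of a Dirichlet character. -/
noncomputable def conjChar {k : ℕ} (χ : DirichletCharacter ℂ k) : DirichletCharacter ℂ k :=
  χ.ringHomComp (starRingEnd ℂ)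

/-- The character Dedekind sum `s_p(b,c : χ₁, χ₂)` for characters of the same modulus. -/
noncomputable def sChar {k : ℕ} (p b c : ℕ) (χ₁ χ₂ : DirichletCharacter ℂ k) : ℂ :=
  ∑ n ∈ Finset.range (c * k),
    χ₁ (n : ZMod k) * BFunChar χ₂ p (((b : ℝ) * n) / c) * ((BFun 1 ((n : ℝ) / (c * k))) : ℂ)

/-- The sum `S̃_p(b,c : χ₁, χ₂)` for characters of (possibly) different moduli. -/
noncomputable def StildeChar {k₁ k₂ : ℕ} (p b c : ℕ) (χ₁ : DirichletCharacter ℂ k₁)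
    (χ₂ : DirichletCharacter ℂ k₂) : ℂ :=
  ∑ n ∈ Finset.range (c * k₁),
    χ₁ (n : ZMod k₁) * BFunChar χ₂ p (((n : ℝ) * b * k₂) / (c * k₁)) *
      ((BFun 1 ((n : ℝ) / (c * k₁))) : ℂ)

/-!
Multiplying the generating series of `Bₙ(x)` and `Bₙ(y)` and comparing with the derivative of that
of `Bₙ(x + y)` evaluates the binomial convolution of `Bⱼ(x)` and `Bₚ₊₁₋ⱼ(y)`. Read modulo `1`, for
`0 < x, y < 1`, it becomes
`(p + 1) B̄ₚ(x + y) (B̄₁(x) + B̄₁(y)) = ∑ⱼ C(p + 1, j) B̄ⱼ(x) B̄ₚ₊₁₋ⱼ(y) + p B̄ₚ₊₁(x + y)`.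
Put `x = n / (c k₁)` and `y = m / (b k₂)` and sum against `χ₁(n) χ̄₂(m)`. The left side gives the
two Dedekind sums and the convolution gives the products of Bernoulli numbers, because the
multiplication formula lets `B̄_{m,χ}` be computed at any multiple of the modulus. The same formula
collapses the double sum of `B̄ₚ₊₁` to one over residues modulo `k₁` and `k₂`, and this is where
`gcd(b, c)` enters.
-/

section GeneratingFunction

open PowerSeries

variable {A : Type*} [CommRing A] [Algebra ℚ A]

/-- The exponential generating series `∑ Bₙ(x) tⁿ / n!` of the values at `x` of the Bernoulli
polynomials, normalised as in `Polynomial.bernoulli_generating_function`. -/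
noncomputable def bernoulliSeries (x : A) : A⟦X⟧ :=
  PowerSeries.mk fun n ↦ Polynomial.aeval x ((1 / n.factorial : ℚ) • Polynomial.bernoulli n)

lemma factorial_mul_coeff_bernoulliSeries (n : ℕ) (x : A) :
    (n.factorial : A) * coeff n (bernoulliSeries x) =
      Polynomial.aeval x (Polynomial.bernoulli n) := by
  have hn : (n.factorial : ℚ) ≠ 0 := by positivity
  rw [bernoulliSeries, coeff_mk, map_smul, ← map_natCast (algebraMap ℚ A), ← Algebra.smul_def,
    smul_smul, mul_one_div_cancel hn, one_smul]

lemma bernoulliSeries_mul_exp_sub_one (x : A) :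
    bernoulliSeries x * (exp A - 1) = X * rescale x (exp A) :=
  Polynomial.bernoulli_generating_function x

lemma derivative_rescale_exp (x : A) :
    d⁄dX A (rescale x (exp A)) = C x * rescale x (exp A) := by
  ext n
  have hexp := congrArg (coeff n) (derivative_exp A)
  rw [coeff_derivative] at hexp
  rw [coeff_derivative, coeff_rescale, coeff_C_mul, coeff_rescale, pow_succ]
  linear_combination x ^ n * x * hexp

variable [IsDomain A]

lemma exp_sub_one_ne_zero : exp A - 1 ≠ 0 := fun h ↦ by
  simpa [coeff_exp, coeff_one] using congrArg (coeff 1) h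

lemma bernoulliSeries_mul_bernoulliSeries (x y : A) :
    bernoulliSeries x * bernoulliSeries y =
      (1 + C (x + y - 1) * X) * bernoulliSeries (x + y)
        - X * d⁄dX A (bernoulliSeries (x + y)) := by
  have hx := bernoulliSeries_mul_exp_sub_one x
  have hy := bernoulliSeries_mul_exp_sub_one y
  have hxy := bernoulliSeries_mul_exp_sub_one (x + y)
  have hderiv := congrArg (d⁄dX A) hxy
  simp only [Derivation.leibniz, derivative_rescale_exp, map_sub, derivative_exp, derivative_X,
    Derivation.map_one_eq_zero, smul_eq_mul] at hderiv
  have hexp := exp_mul_exp_eq_exp_add x y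
  apply mul_right_cancel₀ (pow_ne_zero 2 (exp_sub_one_ne_zero (A := A)))
  rw [map_sub, map_one]
  linear_combination bernoulliSeries y * (exp A - 1) * hx + X * rescale x (exp A) * hy
    - (1 + (C (x + y) - 1) * X) * (exp A - 1) * hxy + X * (exp A - 1) * hderiv
    - X * exp A * hxy + X ^ 2 * hexp

lemma sum_choose_mul_aeval_bernoulli (p : ℕ) (x y : A) :
    ∑ j ∈ range (p + 2), ((p + 1).choose j : A) * Polynomial.aeval x (Polynomial.bernoulli j) *
        Polynomial.aeval y (Polynomial.bernoulli (p + 1 - j)) =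
      (p + 1) * (x + y - 1) * Polynomial.aeval (x + y) (Polynomial.bernoulli p)
        - p * Polynomial.aeval (x + y) (Polynomial.bernoulli (p + 1)) := by
  have hterm (j : ℕ) (hj : j ∈ range (p + 2)) :
      ((p + 1).choose j : A) * Polynomial.aeval x (Polynomial.bernoulli j) *
        Polynomial.aeval y (Polynomial.bernoulli (p + 1 - j)) =
      ((p + 1).factorial : A) *
        (coeff j (bernoulliSeries x) * coeff (p + 1 - j) (bernoulliSeries y)) := by
    rw [← Nat.choose_mul_factorial_mul_factorial (mem_range_succ_iff.1 hj),
      ← factorial_mul_coeff_bernoulliSeries, ← factorial_mul_coeff_bernoulliSeries]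
    push_cast
    ring
  have hcoeff := congrArg (coeff (p + 1)) (bernoulliSeries_mul_bernoulliSeries x y)
  rw [coeff_mul, Nat.sum_antidiagonal_eq_sum_range_succ_mk, add_mul, one_mul, mul_assoc, map_sub,
    map_add, coeff_C_mul, coeff_succ_X_mul, coeff_succ_X_mul, coeff_derivative] at hcoeff
  rw [sum_congr rfl hterm, ← mul_sum, hcoeff, ← factorial_mul_coeff_bernoulliSeries,
    ← factorial_mul_coeff_bernoulliSeries, Nat.factorial_succ]
  push_cast
  ring

end GeneratingFunction

lemma sum_choose_mul_bernoulliFun (p : ℕ) (x y : ℝ) :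
    ∑ j ∈ range (p + 2), ((p + 1).choose j : ℝ) * bernoulliFun j x * bernoulliFun (p + 1 - j) y =
      (p + 1) * (x + y - 1) * bernoulliFun p (x + y) - p * bernoulliFun (p + 1) (x + y) := by
  simpa only [bernoulliFun, Polynomial.eval_map_algebraMap]
    using sum_choose_mul_aeval_bernoulli p x y

lemma bernoulliFun_add_one (n : ℕ) (x : ℝ) :
    bernoulliFun n (x + 1) = bernoulliFun n x + n * x ^ (n - 1) := by
  simpa [bernoulliFun, Polynomial.aeval_comp, add_comm]
    using congr_arg (·.aeval x) (Polynomial.bernoulli_comp_one_add_X n)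

section PeriodicSums

variable {M : Type*}

lemma sum_range_mul_eq_sum_sum [AddCommMonoid M] (F : ℕ → M) (c k : ℕ) :
    ∑ n ∈ range (c * k), F n = ∑ h ∈ range k, ∑ s ∈ range c, F (h + k * s) := by
  induction c with
  | zero => simp
  | succ c ih =>
    simp only [Nat.succ_mul, sum_range_add, ih, ← sum_add_distrib, sum_range_succ]
    simp only [add_comm, mul_comm]

lemma apply_add_mul_of_periodic {F : ℕ → M} {k : ℕ} (hF : Function.Periodic F k) (h s : ℕ) :
    F (h + k * s) = F h := by
  simpa [mul_comm] using hF.nsmul s h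

lemma sum_range_mul_of_periodic [AddCommMonoid M] {F : ℕ → M} {k : ℕ}
    (hF : Function.Periodic F k) (c : ℕ) :
    ∑ n ∈ range (c * k), F n = c • ∑ h ∈ range k, F h := by
  simp only [sum_range_mul_eq_sum_sum, apply_add_mul_of_periodic hF, sum_const, card_range,
    ← smul_sum]

lemma sum_range_comp_mul_of_coprime [AddCommMonoid M] {F : ℕ → M} {b c : ℕ}
    (hF : Function.Periodic F c) (hbc : b.Coprime c) :
    ∑ i ∈ range c, F (b * i) = ∑ i ∈ range c, F i := by
  have hmaps : Set.MapsTo (fun i ↦ b * i % c) (range c) (range c) := fun i hi ↦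
    mem_coe.2 (mem_range.2 (Nat.mod_lt _ (i.zero_le.trans_lt (mem_range.1 hi))))
  have hinj : Set.InjOn (fun i ↦ b * i % c) (range c) := fun i hi j hj hij ↦
    (Nat.ModEq.cancel_left_of_coprime hbc.symm hij).eq_of_lt_of_lt (mem_range.1 hi) (mem_range.1 hj)
  exact sum_nbij _ hmaps hinj (surjOn_of_injOn_of_card_le _ hmaps hinj le_rfl)
    fun i _ ↦ (hF.map_mod_nat (b * i)).symm

lemma periodic_sum_range_add_div {K : Type*} [Field K] [CharZero K] [AddCommGroup M] {F : K → M}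
    (hF : Function.Periodic F 1) {c : ℕ} (hc : c ≠ 0) :
    Function.Periodic (fun x ↦ ∑ i ∈ range c, F (x + i / c)) (1 / c) := fun x ↦ by
  have hc' : (c : K) ≠ 0 := Nat.cast_ne_zero.2 hc
  have hshift (i : ℕ) : x + 1 / c + i / c = x + (i + 1 : ℕ) / c := by push_cast; ring
  have hends : F (x + (c : ℕ) / c) = F (x + (0 : ℕ) / c) := by simpa [hc'] using hF x
  have hsum := sum_range_succ' (fun i : ℕ ↦ F (x + i / c)) c
  rw [sum_range_succ, hends] at hsum
  simpa only [hshift] using (add_right_cancel hsum).symm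

lemma sum_Icc_one_eq_sum_range [AddCancelCommMonoid M] {F : ℕ → M} {k : ℕ} (h : F k = F 0) :
    ∑ n ∈ Icc 1 k, F n = ∑ n ∈ range k, F n := by
  have hIcc : ∑ n ∈ Icc 1 k, F n = ∑ n ∈ range k, F (n + 1) := by
    rw [range_eq_Ico, sum_Ico_add', zero_add]
    rfl
  have hsum := sum_range_succ' F k
  rw [sum_range_succ, h] at hsum
  rw [hIcc, add_right_cancel hsum]

end PeriodicSums

section BernoulliFunctions

lemma periodic_BFun (m : ℕ) : Function.Periodic (BFun m) 1 := fun x ↦ by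
  have hint : (∃ n : ℤ, x + 1 = n) ↔ ∃ n : ℤ, x = n :=
    ⟨fun ⟨n, hn⟩ ↦ ⟨n - 1, by push_cast; linarith⟩, fun ⟨n, hn⟩ ↦ ⟨n + 1, by push_cast; linarith⟩⟩
  simp only [BFun, Int.self_sub_floor, Int.fract_add_one]
  split_ifs <;> tauto

lemma BFun_eq_bernoulliFun {m : ℕ} {x : ℝ} (hx : x ∈ Set.Ico 0 1) (h : m ≠ 1 ∨ x ≠ 0) :
    BFun m x = bernoulliFun m x := by
  have hfloor : ⌊x⌋ = 0 := Int.floor_eq_zero_iff.2 hx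
  by_cases hm : m = 1
  · subst hm
    have hint : ¬ ∃ n : ℤ, x = n := by
      rintro ⟨n, rfl⟩
      simp_all
    simp [BFun, hint, hfloor]
  · simp [BFun, hm, Int.fract_eq_self.2 hx, BPoly, bernoulliFun]

lemma BFun_mul_of_lt_one (m : ℕ) {c : ℕ} (hc : c ≠ 0) {x : ℝ} (hx : 0 ≤ x) (hcx : c * x < 1) :
    BFun m (c * x) = c ^ m / c * ∑ i ∈ range c, BFun m (x + i / c) := by
  have hc' : (0 : ℝ) < c := by positivity
  have hmem (i : ℕ) (hi : i ∈ range c) : x + i / c ∈ Set.Ico 0 1 := by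
    have hi' : (i : ℝ) + 1 ≤ c := by exact_mod_cast mem_range.1 hi
    refine ⟨by positivity, ?_⟩
    rw [← mul_lt_mul_iff_right₀ hc', mul_add, mul_div_cancel₀ _ hc'.ne']
    linarith
  have hmul := bernoulliFun_mul m hc x
  rcases em (m = 1 ∧ x = 0) with ⟨rfl, rfl⟩ | h
  · obtain ⟨d, rfl⟩ := Nat.exists_eq_succ_of_ne_zero hc
    have hpos (i : ℕ) (hi : i ∈ range d) :
        BFun 1 (0 + (i + 1 : ℕ) / d.succ) = bernoulliFun 1 (0 + (i + 1 : ℕ) / d.succ) :=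
      BFun_eq_bernoulliFun (hmem _ (by simpa using hi)) (.inr (by positivity))
    -- The terms at `0`, where `B̄₁(0) = 0` differs from `B₁(0) = -1/2`, cancel from both sides.
    rw [sum_range_succ', pow_one, div_self hc'.ne', one_mul, mul_zero] at hmul ⊢
    rw [sum_congr rfl hpos]
    simpa [eq_comm] using hmul
  · rw [BFun_eq_bernoulliFun ⟨by positivity, hcx⟩ (by simpa [hc, imp_iff_not_or] using h), hmul]
    congr 1
    refine sum_congr rfl fun i hi ↦ (BFun_eq_bernoulliFun (hmem i hi) ?_).symm
    refine (not_and_or.1 h).imp_right fun hx0 ↦ ?_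
    positivity

lemma BFun_mul (m : ℕ) {c : ℕ} (hc : c ≠ 0) (x : ℝ) :
    BFun m (c * x) = c ^ m / c * ∑ i ∈ range c, BFun m (x + i / c) := by
  have hc' : (c : ℝ) ≠ 0 := Nat.cast_ne_zero.2 hc
  have hx : x - ⌊c * x⌋ * (1 / c) = Int.fract (c * x) / c := by
    rw [Int.fract]
    field_simp
  have hmul := BFun_mul_of_lt_one m hc (x := Int.fract (c * x) / c) (by positivity)
    (by rw [mul_div_cancel₀ _ hc']; exact Int.fract_lt_one _)
  rw [mul_div_cancel₀ _ hc', ← hx] at hmul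
  rw [← (periodic_sum_range_add_div (periodic_BFun m) hc).sub_int_mul_eq ⌊c * x⌋, ← hmul,
    ← (periodic_BFun m).sub_int_mul_eq ⌊c * x⌋, mul_one, Int.self_sub_floor]

-- Modulo `1`, the points `s / (q c) + t / (q b)` run `q` times through the multiples of
-- `1 / (q b c)`.
lemma sum_sum_BFun_add_div_of_coprime (m : ℕ) {q b c : ℕ} (hq : q ≠ 0) (hb : b ≠ 0) (hc : c ≠ 0)
    (hbc : b.Coprime c) (x : ℝ) :
    ∑ s ∈ range (q * c), ∑ t ∈ range (q * b),
        BFun m (x + s / (q * c : ℕ) + t / (q * b : ℕ)) =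
      q * (q * b * c) / (q * b * c) ^ m * BFun m (q * b * c * x) := by
  have hq' : (q : ℝ) ≠ 0 := Nat.cast_ne_zero.2 hq
  have hb' : (b : ℝ) ≠ 0 := Nat.cast_ne_zero.2 hb
  have hc' : (c : ℝ) ≠ 0 := Nat.cast_ne_zero.2 hc
  set F : ℕ → ℝ := fun s ↦ BFun m (q * b * x + s / c) with hF
  have hper : Function.Periodic F c := fun s ↦ by
    simp only [hF, Nat.cast_add, add_div, div_self hc', ← add_assoc, periodic_BFun m _]
  have hperb : Function.Periodic (fun s ↦ F (b * s)) c := fun s ↦ by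
    simpa only [mul_add, smul_eq_mul] using hper.nsmul b (b * s)
  have hinner (s : ℕ) : ∑ t ∈ range (q * b), BFun m (x + s / (q * c : ℕ) + t / (q * b : ℕ)) =
      q * b / (q * b) ^ m * F (b * s) := by
    have hmul := BFun_mul m (mul_ne_zero hq hb) (x + s / (q * c : ℕ))
    have harg : ((q * b : ℕ) : ℝ) * (x + s / (q * c : ℕ)) = q * b * x + (b * s : ℕ) / c := by
      push_cast
      field_simp
    rw [harg] at hmul
    simp only [hF, hmul]
    push_cast
    field_simp
  have houter : BFun m (q * b * c * x) = c ^ m / c * ∑ s ∈ range c, F s := by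
    rw [← BFun_mul m hc]
    ring_nf
  rw [sum_congr rfl fun s _ ↦ hinner s, ← mul_sum, sum_range_mul_of_periodic hperb,
    sum_range_comp_mul_of_coprime hper hbc, houter, nsmul_eq_mul]
  field_simp
  ring

lemma sum_sum_BFun_add_div (p : ℕ) {b c : ℕ} (hb : b ≠ 0) (hc : c ≠ 0) (x : ℝ) :
    ∑ s ∈ range c, ∑ t ∈ range b, BFun (p + 1) (x + s / c + t / b) =
      b.gcd c ^ (p + 1) / (b * c) ^ p * BFun (p + 1) (b * c / b.gcd c * x) := by
  have hq : b.gcd c ≠ 0 := Nat.gcd_ne_zero_left hb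
  obtain ⟨b', c', hbc, hb', hc'⟩ := Nat.exists_coprime b c
  rw [mul_comm] at hb' hc'
  generalize b.gcd c = q at *
  subst hb' hc'
  have hb'' : b' ≠ 0 := right_ne_zero_of_mul hb
  have hc'' : c' ≠ 0 := right_ne_zero_of_mul hc
  have hlcm : ((q * b' : ℕ) : ℝ) * (q * c' : ℕ) / q = q * b' * c' := by
    push_cast
    field_simp
  rw [sum_sum_BFun_add_div_of_coprime (p + 1) hq hb'' hc'' hbc, hlcm]
  push_cast
  field_simp
  ring

lemma BFun_reciprocity (p : ℕ) {x y : ℝ} (hx : x ∈ Set.Ioo 0 1) (hy : y ∈ Set.Ioo 0 1) :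
    (p + 1) * (BFun p (x + y) * (BFun 1 x + BFun 1 y)) =
      ∑ j ∈ range (p + 2), ((p + 1).choose j : ℝ) * BFun j x * BFun (p + 1 - j) y
        + p * BFun (p + 1) (x + y) := by
  have hBFun {z : ℝ} (hz : z ∈ Set.Ioo 0 1) (m : ℕ) : BFun m z = bernoulliFun m z :=
    BFun_eq_bernoulliFun (Set.Ioo_subset_Ico_self hz) (.inr hz.1.ne')
  simp only [hBFun hx, hBFun hy, sum_choose_mul_bernoulliFun, bernoulliFun_one]
  obtain h | h | h := lt_trichotomy (x + y) 1
  · rw [hBFun ⟨add_pos hx.1 hy.1, h⟩, hBFun ⟨add_pos hx.1 hy.1, h⟩]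
    ring
  · have hone : (p : ℝ) * BFun (p + 1) 1 = p * bernoulliFun (p + 1) 1 := by
      rcases eq_or_ne p 0 with rfl | hp
      · simp
      · have hp' : p + 1 ≠ 1 := by simpa using hp
        rw [bernoulliFun_endpoints_eq_of_ne_one hp', ← BFun_eq_bernoulliFun (by simp) (.inl hp'),
          ← (periodic_BFun (p + 1)).eq]
    rw [h]
    linear_combination (p + 1) * BFun p 1 * h - hone
  · obtain ⟨z, hz⟩ : ∃ z, x + y = z + 1 := ⟨x + y - 1, by ring⟩
    have hzmem : z ∈ Set.Ioo 0 1 := ⟨by linarith, by linarith [hx.2, hy.2]⟩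
    have hpow : (p : ℝ) * z ^ (p - 1) * z = p * z ^ p := by
      cases p <;> simp [pow_succ, mul_assoc]
    rw [hz, periodic_BFun, periodic_BFun, hBFun hzmem, hBFun hzmem, bernoulliFun_add_one,
      bernoulliFun_add_one, Nat.add_sub_cancel]
    push_cast
    linear_combination (p + 1) * bernoulliFun p z * hz - (p + 1) * hpow

end BernoulliFunctions

section WeightedSums

/-- The Bernoulli function of level `N` attached to the weight `f`. For `f = χ̄` and `N` the modulus
of `χ` it is the generalized Bernoulli function `B̄_{m,χ}`. -/
noncomputable def weightedBFun (N : ℕ) (f : ℕ → ℂ) (m : ℕ) (x : ℝ) : ℂ :=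
  (N : ℂ) ^ ((m : ℤ) - 1) * ∑ n ∈ range N, f n * BFun m ((n + x) / N)

/-- The Dedekind sum of levels `N`, `M` attached to the weights `f`, `g`. The sum
`S̃_p(b, c : χ₁, χ₂)` is the case `N = c k₁`, `M = b k₂`, `f = χ₁`, `g = χ̄₂`. -/
noncomputable def weightedDedekindSum (p N M : ℕ) (f g : ℕ → ℂ) : ℂ :=
  ∑ n ∈ range N, f n * weightedBFun M g p (n * M / N) * BFun 1 (n / N)

variable {N M : ℕ} {f g : ℕ → ℂ}

lemma natCast_mul_weightedBFun (hN : N ≠ 0) (f : ℕ → ℂ) (m : ℕ) (x : ℝ) :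
    N * weightedBFun N f m x = N ^ m * ∑ n ∈ range N, f n * BFun m ((n + x) / N) := by
  have hN' : (N : ℂ) ≠ 0 := Nat.cast_ne_zero.2 hN
  rw [weightedBFun, zpow_sub_one₀ hN', zpow_natCast]
  field_simp

lemma weightedBFun_mul_of_periodic {k c : ℕ} (hk : k ≠ 0) (hc : c ≠ 0)
    (hf : Function.Periodic f k) (m : ℕ) (x : ℝ) :
    weightedBFun (c * k) f m x = weightedBFun k f m x := by
  have hc' : (c : ℂ) ≠ 0 := Nat.cast_ne_zero.2 hc
  have hclass (h : ℕ) :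
      ∑ s ∈ range c, f (h + k * s) * (BFun m (((h + k * s : ℕ) + x) / (c * k : ℕ)) : ℂ) =
        c / c ^ m * (f h * BFun m ((h + x) / k)) := by
    have hmul := BFun_mul m hc ((h + x) / (c * k))
    have harg (s : ℕ) : ((h + k * s : ℕ) + x) / (c * k : ℕ) = (h + x) / (c * k) + s / c := by
      push_cast
      field_simp
      ring
    rw [show (c : ℝ) * ((h + x) / (c * k)) = (h + x) / k by field_simp] at hmul
    simp only [apply_add_mul_of_periodic hf, harg, ← mul_sum, hmul]
    push_cast
    field_simp
  apply mul_left_cancel₀ (Nat.cast_ne_zero.2 (mul_ne_zero hc hk) : ((c * k : ℕ) : ℂ) ≠ 0)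
  rw [natCast_mul_weightedBFun (mul_ne_zero hc hk), sum_range_mul_eq_sum_sum,
    sum_congr rfl fun h _ ↦ hclass h, ← mul_sum, Nat.cast_mul, mul_assoc,
    natCast_mul_weightedBFun hk, mul_pow]
  field_simp

lemma natCast_mul_weightedDedekindSum (hM : M ≠ 0) (p N : ℕ) (f g : ℕ → ℂ) :
    M * weightedDedekindSum p N M f g = M ^ p * ∑ n ∈ range N, ∑ m ∈ range M,
      f n * g m * (BFun p (n / N + m / M) * BFun 1 (n / N)) := by
  have hM' : (M : ℝ) ≠ 0 := Nat.cast_ne_zero.2 hM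
  have harg (n m : ℕ) : ((m : ℝ) + n * M / N) / M = n / N + m / M := by
    rw [add_div, mul_div_right_comm, mul_div_cancel_right₀ _ hM', add_comm]
  rw [weightedDedekindSum, mul_sum, mul_sum]
  refine sum_congr rfl fun n _ ↦ ?_
  rw [mul_right_comm (f n), mul_left_comm, natCast_mul_weightedBFun hM]
  simp only [harg, mul_sum]
  exact sum_congr rfl fun m _ ↦ by ring

lemma pow_mul_pow_mul_weightedBFun_zero_mul_weightedBFun_zero (hN : N ≠ 0) (hM : M ≠ 0)
    (f g : ℕ → ℂ) {i j p : ℕ} (hij : i + j = p + 1) :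
    (M : ℂ) ^ i * N ^ j * weightedBFun N f i 0 * weightedBFun M g j 0 =
      (N * M) ^ p * ∑ n ∈ range N, ∑ m ∈ range M,
        f n * g m * (BFun i (n / N) * BFun j (m / M)) := by
  have hNM : (N * M : ℂ) ≠ 0 := mul_ne_zero (Nat.cast_ne_zero.2 hN) (Nat.cast_ne_zero.2 hM)
  have hf := natCast_mul_weightedBFun hN f i 0
  have hg := natCast_mul_weightedBFun hM g j 0
  simp only [add_zero] at hf hg
  have hprod : ∑ n ∈ range N, ∑ m ∈ range M, f n * g m * ((BFun i (n / N) : ℂ) * BFun j (m / M)) =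
      (∑ n ∈ range N, f n * BFun i (n / N)) * ∑ m ∈ range M, g m * BFun j (m / M) := by
    simp only [sum_mul_sum, mul_mul_mul_comm]
  have hpow : (N : ℂ) * M * (N * M) ^ p = M ^ i * M ^ j * (N ^ i * N ^ j) := by
    rw [← pow_add, ← pow_add, hij, ← mul_pow, ← pow_succ', mul_comm]
  apply mul_left_cancel₀ hNM
  rw [hprod]
  linear_combination (M : ℂ) ^ i * N ^ j * (M * weightedBFun M g j 0 * hf +
    N ^ i * (∑ n ∈ range N, f n * BFun i (n / N)) * hg) -
    (∑ n ∈ range N, f n * BFun i (n / N)) * (∑ m ∈ range M, g m * BFun j (m / M)) * hpow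

lemma weightedDedekindSum_add_swap (p : ℕ) (hN : N ≠ 0) (hM : M ≠ 0) (f g : ℕ → ℂ) :
    M * N ^ p * weightedDedekindSum p N M f g + N * M ^ p * weightedDedekindSum p M N g f =
      (N * M) ^ p * ∑ n ∈ range N, ∑ m ∈ range M,
        f n * g m * (BFun p (n / N + m / M) * (BFun 1 (n / N) + BFun 1 (m / M))) := by
  have hfg := natCast_mul_weightedDedekindSum hM p N f g
  have hgf := natCast_mul_weightedDedekindSum hN p M g f
  have hswap : ∑ m ∈ range M, ∑ n ∈ range N,
        g m * f n * ((BFun p (m / M + n / N) : ℂ) * BFun 1 (m / M)) =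
      ∑ n ∈ range N, ∑ m ∈ range M, f n * g m * (BFun p (n / N + m / M) * BFun 1 (m / M)) := by
    rw [sum_comm]
    simp only [add_comm, mul_comm]
  rw [hswap] at hgf
  simp only [mul_add, sum_add_distrib]
  rw [mul_pow]
  linear_combination (N : ℂ) ^ p * hfg + (M : ℂ) ^ p * hgf

lemma mul_BFun_reciprocity (p : ℕ) (hf : f 0 = 0) (hg : g 0 = 0) {n m : ℕ} (hn : n ∈ range N)
    (hm : m ∈ range M) :
    (p + 1) * (f n * g m * (BFun p (n / N + m / M) * (BFun 1 (n / N) + BFun 1 (m / M)))) =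
      ∑ j ∈ range (p + 2), ((p + 1).choose j : ℂ) *
          (f n * g m * (BFun j (n / N) * BFun (p + 1 - j) (m / M)))
        + p * (f n * g m * BFun (p + 1) (n / N + m / M)) := by
  rcases eq_or_ne n 0 with rfl | hn0
  · simp [hf]
  rcases eq_or_ne m 0 with rfl | hm0
  · simp [hg]
  have hmem {l L : ℕ} (hl : l ∈ range L) (h0 : l ≠ 0) : (l / L : ℝ) ∈ Set.Ioo 0 1 := by
    have hlL : (l : ℝ) < L := Nat.cast_lt.2 (mem_range.1 hl)
    have hl0 : (0 : ℝ) < l := by positivity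
    exact ⟨div_pos hl0 (hl0.trans hlL), (div_lt_one (hl0.trans hlL)).2 hlL⟩
  have hrec := congrArg ((↑) : ℝ → ℂ) (BFun_reciprocity p (hmem hn hn0) (hmem hm hm0))
  push_cast at hrec
  have hsum : ∑ j ∈ range (p + 2), ((p + 1).choose j : ℂ) *
        (f n * g m * (BFun j (n / N) * BFun (p + 1 - j) (m / M))) =
      f n * g m *
        ∑ j ∈ range (p + 2),
          ((p + 1).choose j : ℂ) * BFun j (n / N) * BFun (p + 1 - j) (m / M) := by
    rw [mul_sum]
    exact sum_congr rfl fun j _ ↦ by ring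
  rw [hsum]
  linear_combination f n * g m * hrec

lemma weightedDedekindSum_reciprocity (p : ℕ) (hN : N ≠ 0) (hM : M ≠ 0) (hf : f 0 = 0)
    (hg : g 0 = 0) :
    (p + 1) * (M * N ^ p * weightedDedekindSum p N M f g
        + N * M ^ p * weightedDedekindSum p M N g f) =
      ∑ j ∈ range (p + 2), ((p + 1).choose j : ℂ) * M ^ j * N ^ (p + 1 - j) *
        weightedBFun N f j 0 * weightedBFun M g (p + 1 - j) 0
      + p * ((N * M) ^ p *
          ∑ n ∈ range N, ∑ m ∈ range M, f n * g m * BFun (p + 1) (n / N + m / M)) := by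
  have hproduct (j : ℕ) (hj : j ∈ range (p + 2)) :
      ((p + 1).choose j : ℂ) * M ^ j * N ^ (p + 1 - j) *
          weightedBFun N f j 0 * weightedBFun M g (p + 1 - j) 0 =
        (N * M) ^ p * ∑ n ∈ range N, ∑ m ∈ range M, ((p + 1).choose j : ℂ) *
          (f n * g m * (BFun j (n / N) * BFun (p + 1 - j) (m / M))) := by
    have hij : j + (p + 1 - j) = p + 1 := Nat.add_sub_cancel' (mem_range_succ_iff.1 hj)
    simp only [← mul_sum]
    linear_combination ((p + 1).choose j : ℂ) *
      pow_mul_pow_mul_weightedBFun_zero_mul_weightedBFun_zero hN hM f g hij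
  rw [weightedDedekindSum_add_swap p hN hM, sum_congr rfl hproduct, ← mul_sum, ← sum_comm_cycle,
    mul_left_comm, mul_left_comm (p : ℂ), ← mul_add]
  simp only [mul_sum (a := (p : ℂ)), mul_sum (a := (p + 1 : ℂ)), ← sum_add_distrib]
  exact congrArg _ (sum_congr rfl fun n hn ↦ sum_congr rfl fun m hm ↦
    mul_BFun_reciprocity p hf hg hn hm)

lemma sum_sum_mul_BFun_of_periodic (p : ℕ) {b c k₁ k₂ : ℕ} (hb : b ≠ 0) (hc : c ≠ 0) (hk₁ : k₁ ≠ 0)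
    (hk₂ : k₂ ≠ 0) (hf : Function.Periodic f k₁) (hg : Function.Periodic g k₂) :
    ((c * k₁ : ℕ) * (b * k₂ : ℕ) : ℂ) ^ p * ∑ n ∈ range (c * k₁), ∑ m ∈ range (b * k₂),
        f n * g m * BFun (p + 1) (n / (c * k₁ : ℕ) + m / (b * k₂ : ℕ)) =
      (b.gcd c : ℂ) ^ (p + 1) * (k₁ * k₂) ^ p * ∑ h ∈ range k₁, ∑ j ∈ range k₂,
        f h * g j * BFun (p + 1) (c * j / (b.gcd c * k₂) + b * h / (b.gcd c * k₁)) := by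
  have hq : b.gcd c ≠ 0 := Nat.gcd_ne_zero_left hb
  have hclass (h j : ℕ) : ∑ s ∈ range c, ∑ t ∈ range b, f (h + k₁ * s) * g (j + k₂ * t) *
      (BFun (p + 1) ((h + k₁ * s : ℕ) / (c * k₁ : ℕ) + (j + k₂ * t : ℕ) / (b * k₂ : ℕ)) : ℂ) =
      (b.gcd c : ℂ) ^ (p + 1) / (b * c) ^ p *
        (f h * g j * BFun (p + 1) (c * j / (b.gcd c * k₂) + b * h / (b.gcd c * k₁))) := by
    have hlattice := congrArg ((↑) : ℝ → ℂ)
      (sum_sum_BFun_add_div p hb hc (h / (c * k₁) + j / (b * k₂)))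
    have harg (s t : ℕ) : ((h + k₁ * s : ℕ) : ℝ) / (c * k₁ : ℕ) + (j + k₂ * t : ℕ) / (b * k₂ : ℕ) =
        h / (c * k₁) + j / (b * k₂) + s / c + t / b := by
      push_cast
      field_simp
      ring
    have hscale : (b * c / b.gcd c : ℝ) * (h / (c * k₁) + j / (b * k₂)) =
        c * j / (b.gcd c * k₂) + b * h / (b.gcd c * k₁) := by
      field_simp
      ring
    rw [hscale] at hlattice
    push_cast at hlattice
    simp only [apply_add_mul_of_periodic hf, apply_add_mul_of_periodic hg, harg, ← mul_sum,
      hlattice]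
    ring
  simp only [sum_range_mul_eq_sum_sum, sum_comm (s := range c) (t := range k₂), hclass, ← mul_sum]
  rw [← mul_assoc]
  congr 1
  push_cast
  field_simp
  ring

lemma weightedDedekindSum_reciprocity_of_periodic (p : ℕ) {b c k₁ k₂ : ℕ} (hb : b ≠ 0) (hc : c ≠ 0)
    (hk₁ : k₁ ≠ 0) (hk₂ : k₂ ≠ 0) (hf : Function.Periodic f k₁) (hg : Function.Periodic g k₂)
    (hf0 : f 0 = 0) (hg0 : g 0 = 0) :
    (p + 1) * (b * k₂ * (c * k₁) ^ p * weightedDedekindSum p (c * k₁) (b * k₂) f g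
        + c * k₁ * (b * k₂) ^ p * weightedDedekindSum p (b * k₂) (c * k₁) g f) =
      ∑ j ∈ range (p + 2), ((p + 1).choose j : ℂ) * (b * k₂) ^ j * (c * k₁) ^ (p + 1 - j) *
        weightedBFun k₁ f j 0 * weightedBFun k₂ g (p + 1 - j) 0
      + p * b.gcd c ^ (p + 1) * (k₁ * k₂) ^ p * ∑ h ∈ range k₁, ∑ j ∈ range k₂,
          f h * g j * BFun (p + 1) (c * j / (b.gcd c * k₂) + b * h / (b.gcd c * k₁)) := by
  have hrec := weightedDedekindSum_reciprocity p (mul_ne_zero hc hk₁) (mul_ne_zero hb hk₂) hf0 hg0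
  rw [sum_sum_mul_BFun_of_periodic p hb hc hk₁ hk₂ hf hg] at hrec
  simpa only [weightedBFun_mul_of_periodic hk₁ hc hf, weightedBFun_mul_of_periodic hk₂ hb hg,
    Nat.cast_mul, mul_assoc] using hrec

end WeightedSums

section Characters

open ComplexConjugate

variable {k k₁ k₂ : ℕ}

lemma periodic_comp_natCast {α : Type*} (F : ZMod k → α) :
    Function.Periodic (fun n : ℕ ↦ F n) k := fun n ↦ by
  simp

lemma level_ne_one_of_ne_one {χ : DirichletCharacter ℂ k} (hχ : χ ≠ 1) : k ≠ 1 := by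
  rintro rfl
  exact hχ χ.level_one

lemma conjChar_apply (χ : DirichletCharacter ℂ k) (a : ZMod k) : conjChar χ a = conj (χ a) :=
  rfl

lemma BFunChar_eq_weightedBFun (hk : k ≠ 1) (χ : DirichletCharacter ℂ k) (m : ℕ) (x : ℝ) :
    BFunChar χ m x = weightedBFun k (fun n ↦ conj (χ n)) m x := by
  have hsub : Icc 1 (k - 1) ⊆ range k := fun n hn ↦ by
    rw [mem_Icc] at hn
    exact mem_range.2 (by lia)
  rw [BFunChar, weightedBFun, sum_subset hsub fun n hn hn' ↦ ?_]
  have hn0 : n = 0 := by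
    rw [mem_range] at hn
    rw [mem_Icc] at hn'
    lia
  rw [hn0, Nat.cast_zero, χ.map_zero' hk, map_zero, zero_mul]

lemma StildeChar_eq_weightedDedekindSum {b : ℕ} (hb : b ≠ 0) (hk₂0 : k₂ ≠ 0) (hk₂ : k₂ ≠ 1)
    (p c : ℕ) (χ₁ : DirichletCharacter ℂ k₁) (χ₂ : DirichletCharacter ℂ k₂) :
    StildeChar p b c χ₁ χ₂ =
      weightedDedekindSum p (c * k₁) (b * k₂) (fun n ↦ χ₁ n) (fun n ↦ conj (χ₂ n)) := by
  have hper : Function.Periodic (fun n : ℕ ↦ conj (χ₂ n)) k₂ :=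
    periodic_comp_natCast fun a ↦ conj (χ₂ a)
  simp only [StildeChar, weightedDedekindSum, BFunChar_eq_weightedBFun hk₂,
    weightedBFun_mul_of_periodic hk₂0 hb hper]
  push_cast
  simp only [mul_assoc]

theorem reciprocity_StildeChar_general (b c : ℕ) (hb : 0 < b) (hc : 0 < c) (q : ℕ)
    (hq : q = Nat.gcd b c) (p : ℕ) (k₁ k₂ : ℕ) [NeZero k₁] [NeZero k₂]
    (χ₁ : DirichletCharacter ℂ k₁) (χ₂ : DirichletCharacter ℂ k₂) (hk₁ : k₁ ≠ 1) (hk₂ : k₂ ≠ 1) :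
    ((p : ℂ) + 1) * ((b : ℂ) * (k₂ : ℂ) * ((c : ℂ) * k₁) ^ p * StildeChar p b c χ₁ χ₂
        + (c : ℂ) * (k₁ : ℂ) * ((b : ℂ) * k₂) ^ p * StildeChar p c b (conjChar χ₂) (conjChar χ₁)) =
      (∑ j ∈ Finset.range (p + 2), (Nat.choose (p + 1) j : ℂ) * ((b : ℂ) * k₂) ^ j *
          ((c : ℂ) * k₁) ^ (p + 1 - j) * BNumChar (conjChar χ₁) j * BNumChar χ₂ (p + 1 - j))
      + (p : ℂ) * (q : ℂ) ^ (p + 1) * ((k₁ : ℂ) * k₂) ^ p *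
          ∑ h ∈ Finset.Icc 1 k₁, ∑ j ∈ Finset.Icc 1 k₂,
            χ₁ (h : ZMod k₁) * (starRingEnd ℂ) (χ₂ (j : ZMod k₂)) *
              ((BFun (p + 1) ((c : ℝ) * j / (q * k₂) + (b : ℝ) * h / (q * k₁))) : ℂ) := by
  have hf0 : χ₁ (0 : ℕ) = 0 := by rw [Nat.cast_zero, χ₁.map_zero' hk₁]
  have hg0 : conj (χ₂ (0 : ℕ)) = 0 := by rw [Nat.cast_zero, χ₂.map_zero' hk₂, map_zero]
  have hf : Function.Periodic (fun n : ℕ ↦ χ₁ n) k₁ := periodic_comp_natCast χ₁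
  have hg : Function.Periodic (fun n : ℕ ↦ conj (χ₂ n)) k₂ :=
    periodic_comp_natCast fun a ↦ conj (χ₂ a)
  have hIcc₁ (G : ℕ → ℂ) : ∑ h ∈ Icc 1 k₁, χ₁ h * G h = ∑ h ∈ range k₁, χ₁ h * G h :=
    sum_Icc_one_eq_sum_range (by rw [hf.eq, hf0, zero_mul, zero_mul])
  have hIcc₂ (G : ℕ → ℂ) : ∑ j ∈ Icc 1 k₂, conj (χ₂ j) * G j = ∑ j ∈ range k₂, conj (χ₂ j) * G j :=
    sum_Icc_one_eq_sum_range (by rw [hg.eq, hg0, zero_mul, zero_mul])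
  have hrec := weightedDedekindSum_reciprocity_of_periodic p hb.ne' hc.ne' (NeZero.ne k₁)
    (NeZero.ne k₂) hf hg hf0 hg0
  simp only [StildeChar_eq_weightedDedekindSum hb.ne' (NeZero.ne k₂) hk₂,
    StildeChar_eq_weightedDedekindSum hc.ne' (NeZero.ne k₁) hk₁, BNumChar,
    BFunChar_eq_weightedBFun hk₁, BFunChar_eq_weightedBFun hk₂, conjChar_apply, Complex.conj_conj]
  simp only [hq, hrec, mul_assoc (χ₁ _), ← mul_sum, hIcc₁, hIcc₂]

end Characters

/-- Reciprocity formula for the sums `S̃_p` attached to two primitive characters of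
moduli `k₁` and `k₂` (Theorem 1.2). -/
theorem reciprocity_StildeChar (b c : ℕ) (hb : 0 < b) (hc : 0 < c) (q : ℕ)
    (hq : q = Nat.gcd b c) (p : ℕ) (hp : 1 < p) (k₁ k₂ : ℕ) [NeZero k₁] [NeZero k₂]
    (χ₁ : DirichletCharacter ℂ k₁) (χ₂ : DirichletCharacter ℂ k₂)
    (h₁ : χ₁ ≠ 1) (h₂ : χ₂ ≠ 1) (hprim₁ : χ₁.IsPrimitive) (hprim₂ : χ₂.IsPrimitive)
    (hpar : (-1 : ℂ) ^ (p + 1) * χ₁ (-1) * χ₂ (-1) = 1) :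
    ((p : ℂ) + 1) * ((b : ℂ) * (k₂ : ℂ) * ((c : ℂ) * k₁) ^ p * StildeChar p b c χ₁ χ₂
        + (c : ℂ) * (k₁ : ℂ) * ((b : ℂ) * k₂) ^ p * StildeChar p c b (conjChar χ₂) (conjChar χ₁)) =
      (∑ j ∈ Finset.range (p + 2), (Nat.choose (p + 1) j : ℂ) * ((b : ℂ) * k₂) ^ j *
          ((c : ℂ) * k₁) ^ (p + 1 - j) * BNumChar (conjChar χ₁) j * BNumChar χ₂ (p + 1 - j))
      + (p : ℂ) * (q : ℂ) ^ (p + 1) * ((k₁ : ℂ) * k₂) ^ p *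
          ∑ h ∈ Finset.Icc 1 k₁, ∑ j ∈ Finset.Icc 1 k₂,
            χ₁ (h : ZMod k₁) * (starRingEnd ℂ) (χ₂ (j : ZMod k₂)) *
              ((BFun (p + 1) ((c : ℝ) * j / (q * k₂) + (b : ℝ) * h / (q * k₁))) : ℂ) :=
  reciprocity_StildeChar_general b c hb hc q hq p k₁ k₂ χ₁ χ₂ (level_ne_one_of_ne_one h₁)
    (level_ne_one_of_ne_one h₂)
end

section
/- Let b, c be coprime positive integers, let p > 1 be an integer, let l be an integer with 0 ≤ l ≤ p−2, and let χ₁, χ₂ be non-principal primitive Dirichlet characters of the same modulus k satisfying (−1)^{p+1}·χ₁(−1)·χ₂(−1) = −1. Then C(p,l+1)·(−b/c)^l·b · ∫_0^k x·B̄_{l+1,χ̄₁}(cx)·B̄_{p−(l+1),χ₂}(bx) dx = χ₁(−1)·(k/2)·(k/c)^{p−1} · Σ_{h=1}^{k−1} Σ_{j=1}^{k−1} χ₁(h)·χ̄₂(j)·B̄_p( (c·j + b·h)/k ). -/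
open Finset

/-!
The Fourier coefficients of `B̄ₘ` are `-m! / (2πin)ᵐ`. For coprime `b`, `c`, the frequencies common
to `y ↦ B̄ₘ(cy + α)` and `y ↦ B̄ₙ(by + β)` are the multiples of `bc`, so Parseval's identity
evaluates `∫₀¹ B̄ₘ(cy + α) B̄ₙ(by + β) dy` as a multiple of `B̄ₘ₊ₙ(cβ - bα)`; summing against the
characters gives the integral of a product of two generalized Bernoulli functions. The factor `x`
is removed by the reflection `x ↦ k - x`: the parity condition makes the rest of the integrand
invariant, so that `x` may be replaced by its mean `k / 2`.
-/

open MeasureTheory AddCircle Real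
open scoped ComplexConjugate Nat

section FourierCoeff

variable {T : ℝ} [Fact (0 < T)]
variable {E : Type*} [NormedAddCommGroup E] [NormedSpace ℂ E]

theorem hasSum_conj_fourierCoeff_mul_fourierCoeff {f g : AddCircle T → ℂ}
    (hf : MemLp f 2 haarAddCircle) (hg : MemLp g 2 haarAddCircle) :
    HasSum (fun n : ℤ => conj (fourierCoeff f n) * fourierCoeff g n)
      (∫ y, conj (f y) * g y ∂haarAddCircle) := by
  have inner_fourierBasis {u : AddCircle T → ℂ} (hu : MemLp u 2 haarAddCircle) (n : ℤ) :
      inner ℂ (fourierBasis n) hu.toLp = fourierCoeff u n := by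
    rw [← HilbertBasis.repr_apply_apply, fourierBasis_repr]
    exact congrFun (fourierCoeff_congr_ae hu.coeFn_toLp) n
  have inner_toLp : inner ℂ hf.toLp hg.toLp = ∫ y, conj (f y) * g y ∂haarAddCircle := by
    rw [L2.inner_def]
    refine integral_congr_ae ?_
    filter_upwards [hf.coeFn_toLp, hg.coeFn_toLp] with y hfy hgy
    rw [hfy, hgy, RCLike.inner_apply, mul_comm]
  convert! fourierBasis.hasSum_inner_mul_inner hf.toLp hg.toLp using 1
  · ext n
    rw [← inner_conj_symm, inner_fourierBasis hf, inner_fourierBasis hg]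
  · exact inner_toLp.symm

theorem fourierCoeff_comp_add_right (f : AddCircle T → E) (a : AddCircle T) (n : ℤ) :
    fourierCoeff (fun y => f (y + a)) n = fourier n a • fourierCoeff f n := by
  have fourier_neg_sub (y : AddCircle T) :
      fourier (-n) y = fourier n a * fourier (-n) (y + a) := by
    simp only [fourier_apply, ← Circle.coe_mul, ← toCircle_add]
    congr 2
    simp [smul_add]
  calc fourierCoeff (fun y => f (y + a)) n
      = ∫ y, fourier n a • fourier (-n) (y + a) • f (y + a) ∂haarAddCircle := by
        simp only [fourierCoeff, smul_smul, ← fourier_neg_sub]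
    _ = fourier n a • fourierCoeff f n := by
        rw [integral_smul, integral_add_right_eq_self (fun y => fourier (-n) y • f y), fourierCoeff]

theorem fourierCoeff_eq_zero_of_forall_add_eq {f : AddCircle T → E} {u : AddCircle T}
    (hf : ∀ y, f (y + u) = f y) {n : ℤ} (hn : n • u ≠ 0) : fourierCoeff f n = 0 := by
  have fourier_ne_one : fourier n u ≠ 1 := by
    rw [fourier_apply, Ne, Circle.coe_eq_one, ← toCircle_zero (T := T)]
    exact fun h => hn (injective_toCircle (Fact.out : 0 < T).ne' h)
  have fourier_smul_self : fourier n u • fourierCoeff f n = fourierCoeff f n := by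
    rw [← fourierCoeff_comp_add_right, funext hf]
  by_contra h
  exact fourier_ne_one (smul_left_injective ℂ h (fourier_smul_self.trans (one_smul ℂ _).symm))

theorem measurePreserving_nsmul_haarAddCircle {c : ℕ} (hc : c ≠ 0) :
    MeasurePreserving (fun y : AddCircle T => c • y) haarAddCircle haarAddCircle := by
  simpa only [natCast_zsmul] using
    Measure.measurePreserving_zsmul haarAddCircle (Int.natCast_ne_zero.mpr hc)

theorem fourierCoeff_comp_nsmul_mul {f : AddCircle T → E}
    (hf : AEStronglyMeasurable f haarAddCircle) {c : ℕ} (hc : c ≠ 0) (n : ℤ) :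
    fourierCoeff (fun y => f (c • y)) (c * n) = fourierCoeff f n := by
  have mp := measurePreserving_nsmul_haarAddCircle (T := T) hc
  have fourier_mul (y : AddCircle T) : fourier (-(c * n)) y = fourier (-n) (c • y) := by
    rw [fourier_apply, fourier_apply, ← natCast_zsmul, ← mul_smul, neg_mul, mul_comm]
  have hG : AEStronglyMeasurable (fun y => fourier (-n) y • f y)
      (Measure.map (fun y : AddCircle T => c • y) haarAddCircle) := by
    rw [mp.map_eq]
    exact (fourier (-n)).continuous.aestronglyMeasurable.smul hf
  simp_rw [fourierCoeff, fourier_mul]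
  rw [← integral_map mp.aemeasurable hG, mp.map_eq]

theorem fourierCoeff_comp_nsmul_of_not_dvd (f : AddCircle T → E) {c : ℕ} (hc : c ≠ 0) {n : ℤ}
    (hn : ¬ (c : ℤ) ∣ n) : fourierCoeff (fun y => f (c • y)) n = 0 := by
  set u : AddCircle T := ((T / c : ℝ) : AddCircle T)
  have addOrderOf_u : addOrderOf u = c := addOrderOf_period_div (Nat.pos_of_ne_zero hc)
  refine fourierCoeff_eq_zero_of_forall_add_eq (u := u) (fun y => ?_) ?_
  · have nsmul_u : c • u = 0 := by
      simpa only [addOrderOf_u] using addOrderOf_nsmul_eq_zero u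
    rw [smul_add, nsmul_u, add_zero]
  · rwa [Ne, ← addOrderOf_dvd_iff_zsmul_eq_zero, addOrderOf_u]

theorem hasSum_conj_fourierCoeff_mul_fourierCoeff_of_coprime {f g : AddCircle T → ℂ}
    (hf : MemLp f 2 haarAddCircle) (hg : MemLp g 2 haarAddCircle) {b c : ℕ} (hb : b ≠ 0)
    (hc : c ≠ 0) (hbc : b.Coprime c) :
    HasSum (fun n : ℤ => conj (fourierCoeff f (b * n)) * fourierCoeff g (c * n))
      (∫ y, conj (f (c • y)) * g (b • y) ∂haarAddCircle) := by
  have parseval := hasSum_conj_fourierCoeff_mul_fourierCoeff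
    (hf.comp_measurePreserving (measurePreserving_nsmul_haarAddCircle hc))
    (hg.comp_measurePreserving (measurePreserving_nsmul_haarAddCircle hb))
  have mul_injective : Function.Injective fun n : ℤ => (b * c : ℤ) * n :=
    mul_right_injective₀ (by positivity)
  rw [← mul_injective.hasSum_iff] at parseval
  · refine parseval.congr_fun fun n => ?_
    have coeff_f := fourierCoeff_comp_nsmul_mul hf.1 hc (b * n)
    have coeff_g := fourierCoeff_comp_nsmul_mul hg.1 hb (c * n)
    rw [← mul_assoc, mul_comm (c : ℤ)] at coeff_f
    rw [← mul_assoc] at coeff_g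
    simp only [Function.comp_def, coeff_f, coeff_g]
  · intro n hn
    have not_dvd : ¬ ((b : ℤ) ∣ n ∧ (c : ℤ) ∣ n) := fun h => hn <| by
      obtain ⟨t, ht⟩ := (Nat.isCoprime_iff_coprime.mpr hbc).mul_dvd h.1 h.2
      exact ⟨t, ht.symm⟩
    rcases not_and_or.mp not_dvd with h | h
    · simp only [Function.comp_def, fourierCoeff_comp_nsmul_of_not_dvd g hb h, mul_zero]
    · simp only [Function.comp_def, fourierCoeff_comp_nsmul_of_not_dvd f hc h, map_zero, zero_mul]

end FourierCoeff

section PeriodizedBernoulli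

theorem periodizedBernoulli_coe (n : ℕ) (x : ℝ) :
    periodizedBernoulli n (x : UnitAddCircle) = bernoulliFun n (Int.fract x) := by
  rw [← coe_fract, periodizedBernoulli, liftIco_coe_apply]
  simpa using Int.fract_lt_one x

theorem exists_abs_bernoulliFun_fract_le (n : ℕ) :
    ∃ C, ∀ x : ℝ, |bernoulliFun n (Int.fract x)| ≤ C := by
  obtain ⟨C, hC⟩ := isCompact_Icc.exists_bound_of_continuousOn (s := Set.Icc (0 : ℝ) 1)
    (continuous_bernoulliFun n).continuousOn
  exact ⟨C, fun x => hC _ ⟨Int.fract_nonneg x, (Int.fract_lt_one x).le⟩⟩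

theorem measurable_periodizedBernoulli (n : ℕ) : Measurable (periodizedBernoulli n) :=
  (continuous_bernoulliFun n).measurable.comp
    (measurable_subtype_coe.comp (measurableEquivIco 1 0).measurable)

theorem memLp_periodizedBernoulli (n : ℕ) (q : ENNReal) :
    MemLp (fun y => (periodizedBernoulli n y : ℂ)) q haarAddCircle := by
  obtain ⟨C, hC⟩ := exists_abs_bernoulliFun_fract_le n
  refine MemLp.of_bound
    (Complex.measurable_ofReal.comp (measurable_periodizedBernoulli n)).aestronglyMeasurable C
    (.of_forall fun y => ?_)
  obtain ⟨x, rfl⟩ := QuotientAddGroup.mk_surjective y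
  rw [Complex.norm_real, Real.norm_eq_abs]
  exact (periodizedBernoulli_coe n x).symm ▸ hC x

theorem hasSum_one_div_pow_mul_fourier_mul_periodizedBernoulli {n : ℕ} (hn : 2 ≤ n)
    (y : UnitAddCircle) :
    HasSum (fun t : ℤ => 1 / (t : ℂ) ^ n * fourier t y)
      (-(2 * π * Complex.I) ^ n / n ! * periodizedBernoulli n y) := by
  obtain ⟨x, rfl⟩ := QuotientAddGroup.mk_surjective y
  have := hasSum_one_div_pow_mul_fourier_mul_bernoulliFun hn
    ⟨Int.fract_nonneg x, (Int.fract_lt_one x).le⟩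
  rwa [← periodizedBernoulli_coe, coe_fract] at this

theorem fourierCoeff_periodizedBernoulli_add {n : ℕ} (hn : n ≠ 0) (a : UnitAddCircle) (t : ℤ) :
    fourierCoeff (fun y => (periodizedBernoulli n (y + a) : ℂ)) t =
      fourier t a * (-n ! / (2 * π * Complex.I * t) ^ n) := by
  rw [fourierCoeff_comp_add_right (fun y => (periodizedBernoulli n y : ℂ)), smul_eq_mul]
  exact congrArg _ (fourierCoeff_bernoulli_eq hn t)

theorem fourier_nsmul_sub_nsmul {T : ℝ} (b c : ℕ) (α β : AddCircle T) (t : ℤ) :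
    (fourier t (c • β - b • α) : ℂ) = conj (fourier (b * t) α) * fourier (c * t) β := by
  rw [← fourier_neg]
  simp only [fourier_apply, ← Circle.coe_mul, ← toCircle_add, ← natCast_zsmul, smul_sub,
    ← mul_smul, neg_smul, mul_comm t]
  rw [sub_eq_neg_add]

theorem conj_fourierCoeff_mul_fourierCoeff_periodizedBernoulli_add {m n : ℕ} (hm : m ≠ 0)
    (hn : n ≠ 0) (b c : ℕ) (α β : UnitAddCircle) (t : ℤ) :
    conj (fourierCoeff (fun y => (periodizedBernoulli m (y + α) : ℂ)) (b * t)) *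
        fourierCoeff (fun y => (periodizedBernoulli n (y + β) : ℂ)) (c * t) =
      (-1) ^ m * (m ! * n !) / ((2 * π * Complex.I) ^ (m + n) * (b ^ m * c ^ n)) *
        (1 / (t : ℂ) ^ (m + n) * fourier t (c • β - b • α)) := by
  have conj_pow : conj ((2 * π * Complex.I * (b * t : ℤ)) ^ m : ℂ) =
      (-1) ^ m * (2 * π * Complex.I) ^ m * b ^ m * t ^ m := by
    simp only [map_pow, map_mul, map_ofNat, Complex.conj_ofReal, Complex.conj_I, map_intCast,
      ← mul_pow]
    push_cast
    ring
  rw [fourierCoeff_periodizedBernoulli_add hm, fourierCoeff_periodizedBernoulli_add hn,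
    fourier_nsmul_sub_nsmul, map_mul, map_div₀, conj_pow, map_neg, map_natCast]
  have inv_sign : ((-1 : ℂ) ^ m)⁻¹ = (-1) ^ m := by rw [← inv_pow, inv_neg_one]
  simp only [div_eq_mul_inv, mul_inv, inv_sign]
  push_cast
  ring

theorem integral_periodizedBernoulli_mul_periodizedBernoulli {m n b c : ℕ} (hm : m ≠ 0)
    (hn : n ≠ 0) (hb : b ≠ 0) (hc : c ≠ 0) (hbc : b.Coprime c) (α β : UnitAddCircle) :
    ∫ y, (periodizedBernoulli m (c • y + α) : ℂ) * periodizedBernoulli n (b • y + β)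
        ∂haarAddCircle =
      (-1) ^ (m + 1) / ((m + n).choose m * b ^ m * c ^ n) *
        periodizedBernoulli (m + n) (c • β - b • α) := by
  have parseval := hasSum_conj_fourierCoeff_mul_fourierCoeff_of_coprime
    ((memLp_periodizedBernoulli m 2).comp_measurePreserving
      (measurePreserving_add_right haarAddCircle α))
    ((memLp_periodizedBernoulli n 2).comp_measurePreserving
      (measurePreserving_add_right haarAddCircle β)) hb hc hbc
  simp only [Function.comp_def, Complex.conj_ofReal,
    conj_fourierCoeff_mul_fourierCoeff_periodizedBernoulli_add hm hn] at parseval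
  have series := hasSum_one_div_pow_mul_fourier_mul_periodizedBernoulli
    (show 2 ≤ m + n by lia) (c • β - b • α)
  rw [parseval.unique (series.mul_left _), Nat.cast_add_choose ℂ]
  have := Complex.two_pi_I_ne_zero
  field_simp
  ring

end PeriodizedBernoulli

section BFun

theorem BFun_eq_ite (n : ℕ) (x : ℝ) :
    BFun n x = if n = 1 ∧ Int.fract x = 0 then 0 else bernoulliFun n (Int.fract x) := by
  have exists_iff : (∃ m : ℤ, x = m) ↔ Int.fract x = 0 := by
    simp only [Int.fract_eq_zero_iff, Set.mem_range, eq_comm]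
  by_cases hn : n = 1
  · simp [BFun, exists_iff, hn, bernoulliFun_one]
  · simp only [BFun, hn, false_and, if_false]
    rfl

theorem BFun_periodic (n : ℕ) : Function.Periodic (BFun n) 1 := fun x => by
  simp only [BFun_eq_ite, Int.fract_add_one]

theorem BFun_neg (n : ℕ) (x : ℝ) : BFun n (-x) = (-1) ^ n * BFun n x := by
  by_cases hx : Int.fract x = 0
  · have hx' : Int.fract (-x) = 0 := Int.fract_neg_eq_zero.mpr hx
    by_cases hn : n = 1
    · simp [BFun_eq_ite, hx, hx', hn]
    · have endpoints := bernoulliFun_eval_one_sub (k := n) (x := 0)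
      rw [sub_zero, bernoulliFun_endpoints_eq_of_ne_one hn] at endpoints
      simpa [BFun_eq_ite, hx, hx', hn] using endpoints
  · rw [BFun_eq_ite, BFun_eq_ite, if_neg (Int.fract_neg_eq_zero.not.mpr hx ∘ And.right),
      if_neg (hx ∘ And.right), Int.fract_neg hx, bernoulliFun_eval_one_sub]

theorem measurable_BFun (n : ℕ) : Measurable (BFun n) := by
  simp_rw [funext (BFun_eq_ite n)]
  refine Measurable.ite ?_ measurable_const
    ((continuous_bernoulliFun n).measurable.comp measurable_fract)
  exact (MeasurableSet.const _).inter (measurable_fract (measurableSet_singleton 0))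

theorem exists_abs_BFun_le (n : ℕ) : ∃ C, ∀ x, |BFun n x| ≤ C := by
  obtain ⟨C, hC⟩ := exists_abs_bernoulliFun_fract_le n
  refine ⟨C, fun x => ?_⟩
  rw [BFun_eq_ite]
  split_ifs
  · exact abs_zero.trans_le ((abs_nonneg _).trans (hC x))
  · exact hC x

theorem intervalIntegrable_BFun_mul_BFun (m n : ℕ) {u v : ℝ → ℝ} (hu : Measurable u)
    (hv : Measurable v) (a b : ℝ) :
    IntervalIntegrable (fun x => (BFun m (u x) : ℂ) * BFun n (v x)) volume a b := by
  obtain ⟨C, hC⟩ := exists_abs_BFun_le m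
  obtain ⟨D, hD⟩ := exists_abs_BFun_le n
  have measurable_mul : Measurable fun x => (BFun m (u x) : ℂ) * BFun n (v x) :=
    (Complex.measurable_ofReal.comp ((measurable_BFun m).comp hu)).mul
      (Complex.measurable_ofReal.comp ((measurable_BFun n).comp hv))
  refine (intervalIntegrable_const (c := C * D)).mono_fun' measurable_mul.aestronglyMeasurable
    (.of_forall fun x => ?_)
  simp only [norm_mul, Complex.norm_real, Real.norm_eq_abs]
  exact mul_le_mul (hC _) (hD _) (abs_nonneg _) ((abs_nonneg _).trans (hC (u x)))

theorem BFun_eq_periodizedBernoulli {n : ℕ} (hn : n ≠ 1) (x : ℝ) :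
    BFun n x = periodizedBernoulli n (x : UnitAddCircle) := by
  simp [BFun_eq_ite, periodizedBernoulli_coe, hn]

theorem ae_BFun_comp_eq_periodizedBernoulli (n : ℕ) {u : ℝ → ℝ} (hu : Function.Injective u) :
    ∀ᵐ x, BFun n (u x) = periodizedBernoulli n (u x : UnitAddCircle) := by
  have countable_preimage : (u ⁻¹' Set.range ((↑) : ℤ → ℝ)).Countable :=
    (Set.countable_range _).preimage_of_injOn hu.injOn
  filter_upwards [countable_preimage.ae_notMem volume] with x hx
  rw [BFun_eq_ite, periodizedBernoulli_coe,
    if_neg fun h => hx (Int.fract_eq_zero_iff.mp h.2)]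

theorem integral_BFun_mul_BFun {m n b c : ℕ} (hm : m ≠ 0) (hn : n ≠ 0) (hb : b ≠ 0) (hc : c ≠ 0)
    (hbc : b.Coprime c) (α β : ℝ) :
    ∫ y in (0 : ℝ)..1, (BFun m (c * y + α) : ℂ) * BFun n (b * y + β) =
      (-1) ^ (m + 1) / ((m + n).choose m * b ^ m * c ^ n) * BFun (m + n) (c * β - b * α) := by
  have affine_injective {d : ℕ} (hd : d ≠ 0) (γ : ℝ) :
      Function.Injective fun y : ℝ => d * y + γ :=
    (add_left_injective γ).comp (mul_right_injective₀ (Nat.cast_ne_zero.mpr hd))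
  have circle_integral := integral_periodizedBernoulli_mul_periodizedBernoulli hm hn hb hc hbc
    (α : UnitAddCircle) (β : UnitAddCircle)
  rw [integral_haarAddCircle, inv_one, one_smul, ← UnitAddCircle.intervalIntegral_preimage 0,
    zero_add] at circle_integral
  rw [BFun_eq_periodizedBernoulli (by lia)]
  convert! circle_integral using 1
  · refine intervalIntegral.integral_congr_ae ?_
    filter_upwards [ae_BFun_comp_eq_periodizedBernoulli m (affine_injective hc α),
      ae_BFun_comp_eq_periodizedBernoulli n (affine_injective hb β)] with y hm hn _
    rw [hm, hn]
    simp [← nsmul_eq_mul]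
  · simp [← nsmul_eq_mul]

theorem integral_BFun_div_mul_BFun_div {m n b c : ℕ} (hm : m ≠ 0) (hn : n ≠ 0) (hb : b ≠ 0)
    (hc : c ≠ 0) (hbc : b.Coprime c) {T : ℝ} (hT : T ≠ 0) (h j : ℝ) :
    ∫ x in (0 : ℝ)..T, (BFun m ((h + c * x) / T) : ℂ) * BFun n ((j + b * x) / T) =
      T * ((-1) ^ (m + 1) / ((m + n).choose m * b ^ m * c ^ n) *
        BFun (m + n) ((c * j - b * h) / T)) := by
  have rescale := intervalIntegral.integral_comp_div (a := 0) (b := T)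
    (fun y : ℝ => (BFun m (c * y + h / T) : ℂ) * BFun n (b * y + j / T)) hT
  rw [zero_div, div_self hT, integral_BFun_mul_BFun hm hn hb hc hbc, Complex.real_smul] at rescale
  convert! rescale using 1
  · congr! 5 <;> ring_nf
  · congr! 4
    ring

end BFun

theorem integral_id_smul_of_comp_add_sub {E : Type*} [NormedAddCommGroup E] [NormedSpace ℝ E]
    {f : ℝ → E} {a b : ℝ} (hf : IntervalIntegrable f volume a b)
    (hsymm : ∀ x, f (a + b - x) = f x) :
    ∫ x in a..b, x • f x = ((a + b) / 2) • ∫ x in a..b, f x := by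
  have reflect : ∫ x in a..b, x • f x = (a + b) • (∫ x in a..b, f x) - ∫ x in a..b, x • f x := by
    calc ∫ x in a..b, x • f x = ∫ x in a..b, (a + b - x) • f (a + b - x) := by
          rw [intervalIntegral.integral_comp_sub_left (fun x => x • f x)]
          simp
      _ = ∫ x in a..b, ((a + b) • f x - x • f x) := by simp_rw [hsymm, sub_smul]
      _ = _ := by
          rw [intervalIntegral.integral_sub (f := fun x => (a + b) • f x) (hf.smul _)
              (hf.continuousOn_smul (f := fun x => x) continuousOn_id),
            intervalIntegral.integral_smul]
  rw [eq_sub_iff_add_eq, ← two_smul ℝ] at reflect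
  rw [div_eq_inv_mul, mul_smul, ← reflect, inv_smul_smul₀ two_ne_zero]

theorem mul_neg_div_pow_mul_mul_neg_one_pow_div {K : Type*} [Field K] {a b : K} (ha : a ≠ 0)
    (hb : b ≠ 0) (c : K) (l n : ℕ) :
    a * (-b / c) ^ l * b * ((-1) ^ (l + 1 + 1) / (a * b ^ (l + 1) * c ^ n)) = 1 / c ^ (l + n) := by
  have sign : (-1 : K) ^ l * (-1) ^ l = 1 := by rw [← mul_pow, neg_one_mul, neg_neg, one_pow]
  calc a * (-b / c) ^ l * b * ((-1) ^ (l + 1 + 1) / (a * b ^ (l + 1) * c ^ n))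
      = (-1) ^ l * (-1) ^ l * (a * b ^ (l + 1) / (a * b ^ (l + 1))) * (1 / c ^ (l + n)) := by
        rw [neg_div, neg_pow, div_pow]
        ring
    _ = 1 / c ^ (l + n) := by
        rw [sign, div_self (mul_ne_zero ha (pow_ne_zero _ hb)), one_mul, one_mul]

section BFunChar

variable {k : ℕ} (χ χ₁ χ₂ : DirichletCharacter ℂ k)

theorem conj_apply_neg_one : conj (χ (-1)) = χ (-1) := by
  rcases χ.even_or_odd with h | h <;> rw [h] <;> simp

theorem sum_Icc_one_sub_one_reflect {M : Type*} [AddCommMonoid M] (f : ℕ → M) (k : ℕ) :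
    ∑ n ∈ Icc 1 (k - 1), f (k - n) = ∑ n ∈ Icc 1 (k - 1), f n := by
  rw [show Icc 1 (k - 1) = Ico 1 k by grind]
  simpa using Finset.sum_Ico_reflect f 1 (Nat.le_succ k)

theorem conj_apply_natCast_sub {n : ℕ} (hn : n ≤ k) :
    conj (χ ((k - n : ℕ) : ZMod k)) = χ (-1) * conj (χ n) := by
  rw [Nat.cast_sub hn, ZMod.natCast_self, zero_sub, ← neg_one_mul, map_mul, map_mul,
    conj_apply_neg_one]

theorem BFunChar_periodic (m : ℕ) : Function.Periodic (BFunChar χ m) k := fun x => by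
  unfold BFunChar
  congr 1
  refine Finset.sum_congr rfl fun n hn => ?_
  have hk : (k : ℝ) ≠ 0 := by
    rw [Finset.mem_Icc] at hn
    exact_mod_cast (show k ≠ 0 by lia)
  rw [← add_assoc, add_div, div_self hk, BFun_periodic]

theorem BFunChar_neg (m : ℕ) (x : ℝ) :
    BFunChar χ m (-x) = χ (-1) * (-1) ^ m * BFunChar χ m x := by
  unfold BFunChar
  rw [← sum_Icc_one_sub_one_reflect, mul_left_comm]
  congr 1
  rw [Finset.mul_sum]
  refine Finset.sum_congr rfl fun n hn => ?_
  rw [Finset.mem_Icc] at hn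
  have hk : (k : ℝ) ≠ 0 := by exact_mod_cast (show k ≠ 0 by lia)
  have reflect : (((k - n : ℕ) : ℝ) + -x) / k = -((n + x) / k) + 1 := by
    rw [Nat.cast_sub (by lia)]
    field_simp
    ring
  rw [conj_apply_natCast_sub χ (by lia), reflect, BFun_periodic, BFun_neg]
  push_cast
  ring

theorem BFunChar_mul_BFunChar (m n : ℕ) (x y : ℝ) :
    BFunChar χ₁ m x * BFunChar χ₂ n y = (k : ℂ) ^ ((m : ℤ) - 1) * (k : ℂ) ^ ((n : ℤ) - 1) *
      ∑ i ∈ Icc 1 (k - 1) ×ˢ Icc 1 (k - 1), conj (χ₁ i.1) * conj (χ₂ i.2) *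
        ((BFun m ((i.1 + x) / k) : ℂ) * BFun n ((i.2 + y) / k)) := by
  rw [BFunChar, BFunChar, mul_mul_mul_comm, Finset.sum_mul_sum, Finset.sum_product]
  simp only [mul_mul_mul_comm]

theorem intervalIntegrable_BFunChar_mul_BFunChar (m n : ℕ) {u v : ℝ → ℝ} (hu : Measurable u)
    (hv : Measurable v) (a b : ℝ) :
    IntervalIntegrable (fun x => BFunChar χ₁ m (u x) * BFunChar χ₂ n (v x)) volume a b := by
  simp_rw [BFunChar_mul_BFunChar]
  refine .const_mul ?_ _
  simpa only [Finset.sum_fn] using IntervalIntegrable.sum _ fun i _ =>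
    (intervalIntegrable_BFun_mul_BFun m n (by fun_prop) (by fun_prop) a b).const_mul _

theorem integral_BFunChar_mul_BFunChar [NeZero k] {m n b c : ℕ} (hm : m ≠ 0) (hn : n ≠ 0)
    (hb : b ≠ 0) (hc : c ≠ 0) (hbc : b.Coprime c) :
    ∫ x in (0 : ℝ)..k, BFunChar χ₁ m (c * x) * BFunChar χ₂ n (b * x) =
      (k : ℂ) ^ (m + n - 1) * ((-1) ^ (m + 1) / ((m + n).choose m * b ^ m * c ^ n)) *
        ∑ h ∈ Icc 1 (k - 1), ∑ j ∈ Icc 1 (k - 1),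
          conj (χ₁ h) * conj (χ₂ j) * BFun (m + n) ((c * j - b * h) / k) := by
  have hk : (k : ℂ) ≠ 0 := NeZero.ne _
  have pow_eq : (k : ℂ) ^ (m + n - 1) = k ^ ((m : ℤ) - 1) * k ^ ((n : ℤ) - 1) * k := by
    rw [← zpow_natCast, ← zpow_add₀ hk, ← zpow_add_one₀ hk]
    congr 1
    lia
  simp_rw [BFunChar_mul_BFunChar]
  rw [intervalIntegral.integral_const_mul, intervalIntegral.integral_finsetSum fun i _ =>
    (intervalIntegrable_BFun_mul_BFun m n (by fun_prop) (by fun_prop) 0 k).const_mul _]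
  simp_rw [intervalIntegral.integral_const_mul,
    integral_BFun_div_mul_BFun_div hm hn hb hc hbc (NeZero.ne (k : ℝ)), pow_eq,
    ← Finset.sum_product', Finset.mul_sum]
  refine Finset.sum_congr rfl fun i _ => ?_
  push_cast
  ring

theorem sum_conj_mul_sum_conj_mul_BFun_sub (n b c : ℕ) :
    ∑ h ∈ Icc 1 (k - 1), ∑ j ∈ Icc 1 (k - 1),
        conj (χ₁ h) * conj (χ₂ j) * (BFun n ((c * j - b * h) / k) : ℂ) =
      χ₁ (-1) * ∑ h ∈ Icc 1 (k - 1), ∑ j ∈ Icc 1 (k - 1),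
        conj (χ₁ h) * conj (χ₂ j) * BFun n ((c * j + b * h) / k) := by
  rw [← sum_Icc_one_sub_one_reflect]
  simp_rw [Finset.mul_sum]
  refine Finset.sum_congr rfl fun h hh => Finset.sum_congr rfl fun j _ => ?_
  rw [Finset.mem_Icc] at hh
  have hk : (k : ℝ) ≠ 0 := by exact_mod_cast (show k ≠ 0 by lia)
  have reflect : ((c : ℝ) * j - b * (k - h : ℕ)) / k = (c * j + b * h) / k - b * 1 := by
    rw [Nat.cast_sub (by lia)]
    field_simp
    ring
  rw [conj_apply_natCast_sub χ₁ (by lia), reflect, (BFun_periodic n).sub_nat_mul_eq]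
  ring

theorem integral_id_mul_BFunChar_mul_BFunChar {m n : ℕ}
    (hpar : (-1) ^ (m + n) * χ₁ (-1) * χ₂ (-1) = 1) (b c : ℕ) :
    ∫ x in (0 : ℝ)..k, (x : ℂ) * BFunChar χ₁ m (c * x) * BFunChar χ₂ n (b * x) =
      k / 2 * ∫ x in (0 : ℝ)..k, BFunChar χ₁ m (c * x) * BFunChar χ₂ n (b * x) := by
  have symm (x : ℝ) :
      BFunChar χ₁ m (c * (0 + k - x)) * BFunChar χ₂ n (b * (0 + k - x)) =
        BFunChar χ₁ m (c * x) * BFunChar χ₂ n (b * x) := by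
    rw [zero_add, mul_sub, mul_sub, (BFunChar_periodic χ₁ m).nat_mul_sub_eq,
      (BFunChar_periodic χ₂ n).nat_mul_sub_eq, BFunChar_neg, BFunChar_neg]
    linear_combination BFunChar χ₁ m (c * x) * BFunChar χ₂ n (b * x) * hpar
  have mean := integral_id_smul_of_comp_add_sub
    (intervalIntegrable_BFunChar_mul_BFunChar χ₁ χ₂ m n (u := fun x => c * x)
      (v := fun x => b * x) (by fun_prop) (by fun_prop) 0 k) symm
  simpa [Complex.real_smul, mul_assoc] using mean

end BFunChar

theorem integral_mul_BFunChar_eq_double_sum_general (b c : ℕ) (hb : 0 < b) (hc : 0 < c)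
    (hbc : Nat.Coprime b c) (p : ℕ) (hp : 1 < p) (l : ℕ) (hl : l ≤ p - 2)
    (k : ℕ) [NeZero k] (χ₁ χ₂ : DirichletCharacter ℂ k)
    (hpar : (-1 : ℂ) ^ (p + 1) * χ₁ (-1) * χ₂ (-1) = -1) :
    (Nat.choose p (l + 1) : ℂ) * (-(b : ℂ) / c) ^ l * (b : ℂ) *
        ∫ x in (0 : ℝ)..(k : ℝ), (x : ℂ) *
          BFunChar (conjChar χ₁) (l + 1) ((c : ℝ) * x) * BFunChar χ₂ (p - (l + 1)) ((b : ℝ) * x) =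
      χ₁ (-1) * ((k : ℂ) / 2) * ((k : ℂ) / c) ^ (p - 1) *
        ∑ h ∈ Finset.Icc 1 (k - 1), ∑ j ∈ Finset.Icc 1 (k - 1),
          χ₁ (h : ZMod k) * (starRingEnd ℂ) (χ₂ (j : ZMod k)) *
            ((BFun p (((c : ℝ) * j + (b : ℝ) * h) / k)) : ℂ) := by
  obtain ⟨n, rfl, hn⟩ : ∃ n, p = l + 1 + n ∧ n ≠ 0 := ⟨p - (l + 1), by lia, by lia⟩
  have conjChar_apply (z : ZMod k) : conjChar χ₁ z = conj (χ₁ z) := rfl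
  have parity : (-1) ^ (l + 1 + n) * conjChar χ₁ (-1) * χ₂ (-1) = 1 := by
    rw [conjChar_apply, conj_apply_neg_one]
    linear_combination -hpar
  rw [Nat.add_sub_cancel_left, integral_id_mul_BFunChar_mul_BFunChar _ _ parity,
    integral_BFunChar_mul_BFunChar _ _ l.add_one_ne_zero hn hb.ne' hc.ne' hbc,
    sum_conj_mul_sum_conj_mul_BFun_sub]
  simp_rw [conjChar_apply, Complex.conj_conj, conj_apply_neg_one]
  have choose_ne_zero : ((l + 1 + n).choose (l + 1) : ℂ) ≠ 0 :=
    Nat.cast_ne_zero.mpr (Nat.choose_pos (by lia)).ne'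
  have coefficient := mul_neg_div_pow_mul_mul_neg_one_pow_div choose_ne_zero
    (Nat.cast_ne_zero.mpr hb.ne' : (b : ℂ) ≠ 0) c l n
  rw [show l + 1 + n - 1 = l + n by lia, div_pow]
  generalize (Finset.sum _ _ : ℂ) = S
  linear_combination χ₁ (-1) * (k / 2) * k ^ (l + n) * S * coefficient

/-- Evaluation of a weighted integral of a product of two generalized Bernoulli functions as a
double character sum, in the case `(−1)^{p+1} χ₁(−1) χ₂(−1) = −1`. -/
theorem integral_mul_BFunChar_eq_double_sum (b c : ℕ) (hb : 0 < b) (hc : 0 < c)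
    (hbc : Nat.Coprime b c) (p : ℕ) (hp : 1 < p) (l : ℕ) (hl : l ≤ p - 2)
    (k : ℕ) [NeZero k] (χ₁ χ₂ : DirichletCharacter ℂ k)
    (h₁ : χ₁ ≠ 1) (h₂ : χ₂ ≠ 1) (hprim₁ : χ₁.IsPrimitive) (hprim₂ : χ₂.IsPrimitive)
    (hpar : (-1 : ℂ) ^ (p + 1) * χ₁ (-1) * χ₂ (-1) = -1) :
    (Nat.choose p (l + 1) : ℂ) * (-(b : ℂ) / c) ^ l * (b : ℂ) *
        ∫ x in (0 : ℝ)..(k : ℝ), (x : ℂ) *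
          BFunChar (conjChar χ₁) (l + 1) ((c : ℝ) * x) * BFunChar χ₂ (p - (l + 1)) ((b : ℝ) * x) =
      χ₁ (-1) * ((k : ℂ) / 2) * ((k : ℂ) / c) ^ (p - 1) *
        ∑ h ∈ Finset.Icc 1 (k - 1), ∑ j ∈ Finset.Icc 1 (k - 1),
          χ₁ (h : ZMod k) * (starRingEnd ℂ) (χ₂ (j : ZMod k)) *
            ((BFun p (((c : ℝ) * j + (b : ℝ) * h) / k)) : ℂ) :=
  integral_mul_BFunChar_eq_double_sum_general b c hb hc hbc p hp l hl k χ₁ χ₂ hpar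
end
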